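/- arXiv:2405.02838 — 2 statements merged into one kernel-verified Lean document; each statement's English description precedes it below -/
import Mathlib

section
/- Let (q₁,…,qₙ) be a multi-index of nonnegative integers with q = q₁+⋯+qₙ ≤ m. Then D_{(q₁,…,qₙ;q)} := c(m) ∫_{ℂⁿ} |ν₁|^{2q₁} ⋯ |νₙ|^{2qₙ} (1+‖ν‖²)^{-(m+n+1)} dλ(ν) = (q₁! ⋯ qₙ! · (m−q)!) / m!. Equivalently, the squared ⟨·,·⟩ₘ-norm of the monomial ν ↦ ν₁^{q₁}⋯νₙ^{qₙ} equals the reciprocal of the multinomial coefficient m!/(q₁!⋯qₙ!(m−q)!). -/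
open MeasureTheory

/-- The normalizing constant `c(m)`, with
`c(m)⁻¹ = ∫_{ℂⁿ} (1+‖ν‖²)^{-(m+n+1)} dλ(ν)`. -/
noncomputable def cconst (n m : ℕ) : ℝ :=
  (∫ ν : Fin n → ℂ, ((1 + ∑ j, Complex.normSq (ν j)) ^ (m + n + 1))⁻¹)⁻¹

/-! Writing `Γ(s) h^{-s} = ∫_{t > 0} t^{s-1} e^{-th} dt` with `h = 1 + ‖ν‖²` and exchanging the two
integrals turns the integral over `ℂⁿ` into a product of one-dimensional Gaussian moments
`∫_ℂ |z|^{2a} e^{-t|z|²} dλ(z) = π Γ(a+1) t^{-(a+1)}`; what remains is a Gamma integral in `t`.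
The constant `c(m)⁻¹` is the case of the zero multi-index. -/

theorem Gamma_mul_integral_mul_rpow_neg {X : Type*} [MeasurableSpace X] {μ : Measure X} [SFinite μ]
    {f h : X → ℝ} {s : ℝ} (hs : 0 < s) (f_nonneg : 0 ≤ᵐ[μ] f) (h_pos : ∀ᵐ x ∂μ, 0 < h x)
    (f_meas : AEStronglyMeasurable f μ) (h_meas : AEStronglyMeasurable h μ)
    (f_int : ∀ t > 0, Integrable (fun x ↦ f x * Real.exp (-(t * h x))) μ)
    (laplace_int : IntegrableOn
      (fun t ↦ t ^ (s - 1) * ∫ x, f x * Real.exp (-(t * h x)) ∂μ) (Set.Ioi 0)) :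
    Real.Gamma s * ∫ x, f x * h x ^ (-s) ∂μ =
      ∫ t in Set.Ioi 0, t ^ (s - 1) * ∫ x, f x * Real.exp (-(t * h x)) ∂μ := by
  let F : X → ℝ → ℝ := fun x t ↦ t ^ (s - 1) * (f x * Real.exp (-(t * h x)))
  have integral_F_right : ∀ᵐ x ∂μ,
      ∫ t in Set.Ioi 0, F x t = Real.Gamma s * (f x * h x ^ (-s)) := by
    filter_upwards [h_pos] with x hx
    calc ∫ t in Set.Ioi 0, F x t
        = ∫ t in Set.Ioi 0, f x * (t ^ (s - 1) * Real.exp (-(h x * t))) := by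
          simp only [F, mul_comm (h x), mul_left_comm (f x)]
      _ = Real.Gamma s * (f x * h x ^ (-s)) := by
          rw [integral_const_mul, Real.integral_rpow_mul_exp_neg_mul_Ioi hs hx, one_div,
            Real.inv_rpow hx.le, ← Real.rpow_neg hx.le]
          ring
  have F_meas : AEStronglyMeasurable (Function.uncurry F)
      (μ.prod (volume.restrict (Set.Ioi 0))) := by
    have t_meas : AEStronglyMeasurable (fun p : X × ℝ ↦ p.2)
      (μ.prod (volume.restrict (Set.Ioi 0))) := measurable_snd.aestronglyMeasurable
    exact (measurable_snd.pow_const (s - 1)).aestronglyMeasurable.mul <| f_meas.comp_fst.mul <|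
      Real.continuous_exp.comp_aestronglyMeasurable (t_meas.mul h_meas.comp_fst).neg
  have F_int : Integrable (Function.uncurry F) (μ.prod (volume.restrict (Set.Ioi 0))) := by
    refine (integrable_prod_iff' F_meas).2 ⟨?_, laplace_int.congr ?_⟩
    · filter_upwards [ae_restrict_mem measurableSet_Ioi] with t ht
      exact (f_int t ht).const_mul (t ^ (s - 1))
    · filter_upwards [ae_restrict_mem measurableSet_Ioi] with t (ht : 0 < t)
      rw [← integral_const_mul]
      refine integral_congr_ae ?_
      filter_upwards [f_nonneg] with x (hx : 0 ≤ f x)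
      exact (Real.norm_of_nonneg (by positivity)).symm
  rw [← integral_const_mul, ← integral_congr_ae integral_F_right, integral_integral_swap F_int]
  simp only [F, integral_const_mul]

theorem integral_mul_one_add_rpow_neg_of_integral_mul_exp_neg_eq {X : Type*} [MeasurableSpace X]
    {μ : Measure X} [SFinite μ] {f g : X → ℝ} {C r s : ℝ} (hs : 0 < s) (hrs : r < s) (hC : C ≠ 0)
    (f_nonneg : 0 ≤ᵐ[μ] f) (g_nonneg : 0 ≤ᵐ[μ] g)
    (f_meas : AEStronglyMeasurable f μ) (g_meas : AEStronglyMeasurable g μ)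
    (laplace : ∀ t > 0, ∫ x, f x * Real.exp (-(t * g x)) ∂μ = C * t ^ (-r)) :
    ∫ x, f x * (1 + g x) ^ (-s) ∂μ = C * Real.Gamma (s - r) / Real.Gamma s := by
  have f_int (t : ℝ) (ht : 0 < t) : Integrable (fun x ↦ f x * Real.exp (-(t * (1 + g x)))) μ := by
    have : Integrable (fun x ↦ f x * Real.exp (-(t * g x))) μ :=
      .of_integral_ne_zero (laplace t ht ▸ mul_ne_zero hC (Real.rpow_pos_of_pos ht _).ne')
    refine (this.mul_const (Real.exp (-t))).congr (.of_forall fun x ↦ ?_)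
    simp only [mul_assoc, ← Real.exp_add]
    ring_nf
  have shifted_laplace : Set.EqOn
      (fun t ↦ t ^ (s - 1) * ∫ x, f x * Real.exp (-(t * (1 + g x))) ∂μ)
      (fun t ↦ C * (Real.exp (-t) * t ^ (s - r - 1))) (Set.Ioi 0) := by
    intro t (ht : 0 < t)
    simp only [mul_add, mul_one, neg_add_rev, Real.exp_add, ← mul_assoc]
    rw [integral_mul_const, laplace t ht, show s - r - 1 = (s - 1) + -r by ring, Real.rpow_add ht]
    ring
  have laplace_int : IntegrableOn
      (fun t ↦ t ^ (s - 1) * ∫ x, f x * Real.exp (-(t * (1 + g x))) ∂μ) (Set.Ioi 0) :=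
    IntegrableOn.congr_fun ((Real.GammaIntegral_convergent (sub_pos.2 hrs)).const_mul C)
      shifted_laplace.symm measurableSet_Ioi
  have one_add_pos : ∀ᵐ x ∂μ, 0 < 1 + g x := by
    filter_upwards [g_nonneg] with x hx using add_pos_of_pos_of_nonneg one_pos hx
  rw [eq_div_iff (Real.Gamma_pos_of_pos hs).ne', mul_comm,
    Gamma_mul_integral_mul_rpow_neg hs f_nonneg one_add_pos f_meas
      (aestronglyMeasurable_const.add g_meas) f_int laplace_int,
    setIntegral_congr_fun measurableSet_Ioi shifted_laplace, integral_const_mul,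
    ← Real.Gamma_eq_integral (sub_pos.2 hrs)]

theorem integral_normSq_rpow_mul_exp_neg {a t : ℝ} (ha : -1 < a) (ht : 0 < t) :
    ∫ z : ℂ, Complex.normSq z ^ a * Real.exp (-(t * Complex.normSq z)) =
      Real.pi * Real.Gamma (a + 1) * t ^ (-(a + 1)) := by
  have moment := Complex.integral_rpow_mul_exp_neg_mul_rpow (p := 2) (q := 2 * a) one_le_two
    (by linarith) ht
  rw [show (2 * a + 2) / 2 = a + 1 by ring, show -(2 * a + 2) / 2 = -(a + 1) by ring] at moment
  simp only [Real.rpow_mul (norm_nonneg _), Real.rpow_two, ← Complex.normSq_eq_norm_sq,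
    neg_mul] at moment
  rw [moment]
  ring

section

variable {ι : Type*} [Fintype ι]

theorem integral_prod_normSq_rpow_mul_exp_neg {a : ι → ℝ} {t : ℝ} (ha : ∀ j, -1 < a j)
    (ht : 0 < t) :
    ∫ ν : ι → ℂ, (∏ j, Complex.normSq (ν j) ^ a j) *
        Real.exp (-(t * ∑ j, Complex.normSq (ν j))) =
      Real.pi ^ Fintype.card ι * (∏ j, Real.Gamma (a j + 1)) * t ^ (-∑ j, (a j + 1)) := by
  simp only [Finset.mul_sum, ← Finset.sum_neg_distrib, Real.exp_sum, ← Finset.prod_mul_distrib]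
  rw [integral_fintype_prod_volume_eq_prod
    (fun j (z : ℂ) ↦ Complex.normSq z ^ a j * Real.exp (-(t * Complex.normSq z)))]
  simp only [integral_normSq_rpow_mul_exp_neg (ha _) ht, Finset.prod_mul_distrib,
    Finset.prod_const, Finset.card_univ, Real.rpow_sum_of_pos ht]

theorem integral_prod_normSq_rpow_mul_one_add_rpow_neg {a : ι → ℝ} {s : ℝ} (ha : ∀ j, -1 < a j)
    (hs : ∑ j, (a j + 1) < s) :
    ∫ ν : ι → ℂ, (∏ j, Complex.normSq (ν j) ^ a j) * (1 + ∑ j, Complex.normSq (ν j)) ^ (-s) =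
      Real.pi ^ Fintype.card ι * (∏ j, Real.Gamma (a j + 1)) *
        Real.Gamma (s - ∑ j, (a j + 1)) / Real.Gamma s := by
  have a_add_one_pos (j : ι) : 0 < a j + 1 := by linarith [ha j]
  have s_pos : 0 < s := (Finset.sum_nonneg fun j _ ↦ (a_add_one_pos j).le).trans_lt hs
  have Gamma_prod_pos : 0 < ∏ j, Real.Gamma (a j + 1) :=
    Finset.prod_pos fun j _ ↦ Real.Gamma_pos_of_pos (a_add_one_pos j)
  have normSq_meas (j : ι) : Measurable fun ν : ι → ℂ ↦ Complex.normSq (ν j) :=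
    Complex.continuous_normSq.measurable.comp (measurable_pi_apply j)
  refine integral_mul_one_add_rpow_neg_of_integral_mul_exp_neg_eq s_pos hs (by positivity)
    (.of_forall fun ν ↦ ?_) (.of_forall fun ν ↦ ?_) ?_ ?_
    fun t ht ↦ integral_prod_normSq_rpow_mul_exp_neg ha ht
  · exact Finset.prod_nonneg fun j _ ↦ Real.rpow_nonneg (Complex.normSq_nonneg _) _
  · exact Finset.sum_nonneg fun j _ ↦ Complex.normSq_nonneg _
  · exact (Finset.measurable_fun_prod _ fun j _ ↦
      (normSq_meas j).pow_const (a j)).aestronglyMeasurable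
  · exact (Finset.measurable_fun_sum _ fun j _ ↦ normSq_meas j).aestronglyMeasurable

theorem integral_prod_normSq_pow_mul_one_add_pow_inv {m : ℕ} {q : ι → ℕ} (hq : ∑ j, q j ≤ m) :
    ∫ ν : ι → ℂ, (∏ j, Complex.normSq (ν j) ^ q j) *
        ((1 + ∑ j, Complex.normSq (ν j)) ^ (m + Fintype.card ι + 1))⁻¹ =
      Real.pi ^ Fintype.card ι * ((∏ j, (q j).factorial : ℕ) : ℝ) *
        (m - ∑ j, q j).factorial / (m + Fintype.card ι).factorial := by
  have sum_eq : ∑ j, ((q j : ℝ) + 1) = ((∑ j, q j + Fintype.card ι : ℕ) : ℝ) := by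
    simp [Finset.sum_add_distrib]
  have Gamma_arg : ((m + Fintype.card ι : ℕ) + 1 : ℝ) - ∑ j, ((q j : ℝ) + 1) =
      ((m - ∑ j, q j : ℕ) : ℝ) + 1 := by
    rw [sum_eq, Nat.cast_sub hq]
    push_cast
    ring
  have moment := integral_prod_normSq_rpow_mul_one_add_rpow_neg (a := fun j ↦ (q j : ℝ))
    (s := (m + Fintype.card ι : ℕ) + 1)
    (fun j ↦ neg_one_lt_zero.trans_le (q j).cast_nonneg)
    (sub_pos.1 (Gamma_arg ▸ Nat.cast_add_one_pos _))
  simp only [Gamma_arg, Real.Gamma_nat_eq_factorial, Real.rpow_natCast] at moment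
  rw [Nat.cast_prod, ← moment]
  refine integral_congr_ae (.of_forall fun ν ↦ ?_)
  have normSq_sum_nonneg : 0 ≤ ∑ j, Complex.normSq (ν j) :=
    Finset.sum_nonneg fun j _ ↦ Complex.normSq_nonneg _
  simp only [Real.rpow_neg (add_nonneg zero_le_one normSq_sum_nonneg), ← Nat.cast_succ,
    Real.rpow_natCast]

end

theorem cconst_eq (n m : ℕ) :
    cconst n m = (m + n).factorial / (Real.pi ^ n * m.factorial) := by
  have mass := integral_prod_normSq_pow_mul_one_add_pow_inv (ι := Fin n) (m := m) (q := 0)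
    (by simp)
  simp only [Pi.zero_apply, pow_zero, Finset.prod_const_one, one_mul, Fintype.card_fin,
    Nat.factorial_zero, Nat.cast_one, mul_one, Finset.sum_const_zero, Nat.sub_zero] at mass
  rw [cconst, mass, inv_div]

/-- for a multi-index `(q₁,…,qₙ)` with `q = q₁+⋯+qₙ ≤ m`,
`D_{(q₁,…,qₙ;q)} = c(m) ∫_{ℂⁿ} |ν₁|^{2q₁}⋯|νₙ|^{2qₙ} (1+‖ν‖²)^{-(m+n+1)} dλ(ν)
 = q₁!⋯qₙ!(m−q)!/m!`, i.e. the squared weighted norm of the monomial `ν^q` is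
the reciprocal of the multinomial coefficient `m!/(q₁!⋯qₙ!(m−q)!)`. -/
theorem stmt_2 (n m : ℕ) (hn : 1 ≤ n) (q : Fin n → ℕ) (hq : ∑ j, q j ≤ m) :
    cconst n m *
      ∫ ν : Fin n → ℂ, (∏ j, Complex.normSq (ν j) ^ q j) *
        ((1 + ∑ j, Complex.normSq (ν j)) ^ (m + n + 1))⁻¹
    = ((∏ j, (q j).factorial : ℕ) : ℝ) * ((m - ∑ j, q j).factorial : ℝ) /
        (m.factorial : ℝ) := by
  have moment := integral_prod_normSq_pow_mul_one_add_pow_inv hq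
  rw [Fintype.card_fin] at moment
  rw [cconst_eq, moment]
  field_simp
end

section
/- Transition amplitude along a path as holonomy: fix an integer N ≥ 1 and define the transition probability amplitude a_N(v,z) = (1+⟨v,z⟩)^N / ((1+‖v‖²)^{N/2}·(1+‖z‖²)^{N/2}) for v, z ∈ ℂⁿ, where ⟨v,z⟩ = Σⱼ conj(vⱼ)zⱼ. Then for every continuously differentiable path γ : [0,1] → ℂⁿ, the products over uniform partitions converge: lim_{k→∞} Π_{i=0}^{k−1} a_N(γ((i+1)/k), γ(i/k)) = exp( i·N·∫₀¹ Im(Σⱼ conj(γⱼ′(t))·γⱼ(t)) / (1+‖γ(t)‖²) dt ), i.e. the limit equals exp(i ∫_γ Im(∂̄ log K)) for the kernel K(z̄,z) = (1+‖z‖²)^N. -/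
open MeasureTheory

/-- The transition probability amplitude
`a_N(v,z) = (1+⟨v,z⟩)^N / ((1+‖v‖²)^{N/2} (1+‖z‖²)^{N/2})` for the kernel
`K(v̄,z) = (1+⟨v,z⟩)^N` on the affine chart of `ℂPⁿ`. -/
noncomputable def transAmp (n N : ℕ) (v z : Fin n → ℂ) : ℂ :=
  (1 + ∑ j, (starRingEnd ℂ) (v j) * z j) ^ N /
    ((Real.sqrt ((1 + ∑ j, Complex.normSq (v j)) ^ N) *
        Real.sqrt ((1 + ∑ j, Complex.normSq (z j)) ^ N) : ℝ) : ℂ)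

/-!
Passing to the homogeneous lift `ψ = (1, γ)` in `ℂⁿ⁺¹`, the amplitude `a_N` is the `N`-th power of
the normalised inner product `⟪ψ s, ψ t⟫ / (‖ψ s‖ ‖ψ t‖)`.  This two-point function is `1` on the
diagonal, and its derivative in `s` there is `i Im ⟪ψ', ψ⟫ / ‖ψ‖²`: the real part is cancelled by
the normalisation.  For any two-point function `u` with `u t t = 1` and diagonal derivative `f`,
`u s t` and `exp (∫ x in t..s, f x)` agree up to `o(s - t)` uniformly, so the product of their
quotients over a subdivision tends to `1`, while the product of the exponentials telescopes.
-/

open Set Filter Asymptotics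
open scoped Topology Uniformity InnerProductSpace

/-- A finite subdivision `a = point 0 ≤ ⋯ ≤ point size = b` of the interval `[a, b]`. The values of
`point` beyond `size` are irrelevant. -/
structure Subdivision (a b : ℝ) where
  size : ℕ
  point : ℕ → ℝ
  monotone_point : Monotone point
  point_zero : point 0 = a
  point_size : point size = b

variable {a b : ℝ}

namespace Subdivision

/-- The length of the longest step of a subdivision. -/
noncomputable def mesh (P : Subdivision a b) : NNReal :=
  (Finset.range P.size).sup fun i ↦ nndist (P.point (i + 1)) (P.point i)

/-- The filter of ever finer subdivisions of `[a, b]`, that is, of mesh tending to `0`. -/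
noncomputable def fine (a b : ℝ) : Filter (Subdivision a b) :=
  comap mesh (𝓝 0)

/-- The product of a two-point function `u` over the steps of a subdivision, the later point of
each step being the first argument of `u`. -/
def prod {M : Type*} [CommMonoid M] (P : Subdivision a b) (u : ℝ → ℝ → M) : M :=
  ∏ i ∈ Finset.range P.size, u (P.point (i + 1)) (P.point i)

lemma point_mem_Icc (P : Subdivision a b) {i : ℕ} (hi : i ≤ P.size) : P.point i ∈ Icc a b :=
  ⟨P.point_zero.symm.trans_le (P.monotone_point i.zero_le),
    (P.monotone_point hi).trans_eq P.point_size⟩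

lemma sum_sub (P : Subdivision a b) {G : Type*} [AddCommGroup G] (F : ℝ → G) :
    ∑ i ∈ Finset.range P.size, (F (P.point (i + 1)) - F (P.point i)) = F b - F a := by
  rw [Finset.sum_range_sub (fun i ↦ F (P.point i)), P.point_zero, P.point_size]

/-- The subdivision of `[a, b]` into `k + 1` steps of equal length. -/
noncomputable def uniform (hab : a ≤ b) (k : ℕ) : Subdivision a b where
  size := k + 1
  point i := a + (b - a) * (i / (k + 1 : ℕ))
  monotone_point i j hij := by
    have := sub_nonneg.2 hab
    dsimp only
    gcongr
  point_zero := by simp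
  point_size := by rw [div_self (Nat.cast_ne_zero.2 k.succ_ne_zero)]; ring

lemma dist_uniform_succ (hab : a ≤ b) (k i : ℕ) :
    dist ((uniform hab k).point (i + 1)) ((uniform hab k).point i) =
      (b - a) * (1 / ((k : ℝ) + 1)) := by
  have hstep : (uniform hab k).point (i + 1) - (uniform hab k).point i =
      (b - a) * (1 / ((k : ℝ) + 1)) := by
    simp only [uniform, Nat.cast_add_one]
    ring
  rw [Real.dist_eq, hstep, abs_of_nonneg (mul_nonneg (sub_nonneg.2 hab) (by positivity))]

lemma mesh_uniform_le (hab : a ≤ b) (k : ℕ) :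
    (mesh (uniform hab k) : ℝ) ≤ (b - a) * (1 / ((k : ℝ) + 1)) := by
  rw [← dist_uniform_succ hab k 0, ← coe_nndist, NNReal.coe_le_coe]
  refine Finset.sup_le fun i _ ↦ NNReal.coe_le_coe.1 ?_
  rw [coe_nndist, coe_nndist, dist_uniform_succ, dist_uniform_succ]

lemma tendsto_uniform (hab : a ≤ b) : Tendsto (uniform hab) atTop (fine a b) := by
  refine tendsto_comap_iff.2 (NNReal.tendsto_coe.1 ?_)
  refine squeeze_zero (fun k ↦ NNReal.coe_nonneg _) (mesh_uniform_le hab) ?_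
  simpa using tendsto_one_div_add_atTop_nhds_zero_nat.const_mul (b - a)

end Subdivision

/-- Pairs of points of `[a, b]` whose distance tends to `0`. An estimate along this filter is an
estimate near the diagonal of `[a, b] × [a, b]` that is uniform in the position on the diagonal. -/
def nearDiagonal (a b : ℝ) : Filter (ℝ × ℝ) :=
  𝓤 ℝ ⊓ 𝓟 (Icc a b ×ˢ Icc a b)

lemma Subdivision.eventually_forall_step {q : ℝ × ℝ → Prop} (hq : ∀ᶠ p in nearDiagonal a b, q p) :
    ∀ᶠ P in fine a b, ∀ i < P.size, q (P.point (i + 1), P.point i) := by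
  obtain ⟨δ, hδ, hδq⟩ := Metric.mem_uniformity_dist.1 (mem_inf_principal.1 hq)
  lift δ to NNReal using hδ.le
  have hmesh : ∀ᶠ P in fine a b, mesh P < δ :=
    tendsto_comap.eventually (gt_mem_nhds (NNReal.coe_pos.1 hδ))
  filter_upwards [hmesh] with P hP i hi
  have hdist := (Finset.sup_lt_iff (NNReal.coe_pos.1 hδ)).1 hP i (Finset.mem_range.2 hi)
  exact hδq (NNReal.coe_lt_coe.2 hdist) ⟨P.point_mem_Icc hi, P.point_mem_Icc hi.le⟩

section MeanValue

variable {E : Type*} [NormedAddCommGroup E] [NormedSpace ℝ E]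

lemma isLittleO_nearDiagonal_of_hasDerivWithinAt {u u' : ℝ → ℝ → E}
    (hu : ∀ s ∈ Icc a b, ∀ t ∈ Icc a b, HasDerivWithinAt (u · t) (u' s t) (Icc a b) s)
    (hu' : ContinuousOn (Function.uncurry u') (Icc a b ×ˢ Icc a b)) :
    (fun p : ℝ × ℝ ↦ u p.1 p.2 - u p.2 p.2 - (p.1 - p.2) • u' p.2 p.2)
      =o[nearDiagonal a b] fun p ↦ p.1 - p.2 := by
  refine isLittleO_iff.2 fun ε hε ↦ ?_
  obtain ⟨δ, hδ, hδu'⟩ := Metric.uniformContinuousOn_iff.1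
    ((isCompact_Icc.prod isCompact_Icc).uniformContinuousOn_of_continuous hu') ε hε
  refine mem_inf_principal.2 (Metric.mem_uniformity_dist.2 ⟨δ, hδ, ?_⟩)
  rintro s t hst ⟨hs, ht⟩
  have hsub : uIcc t s ⊆ Icc a b := uIcc_subset_Icc ht hs
  have hderiv : ∀ x ∈ uIcc t s,
      HasDerivWithinAt (fun x ↦ u x t - x • u' t t) (u' x t - u' t t) (uIcc t s) x := by
    intro x hx
    simpa using! ((hu x (hsub hx) t ht).mono hsub).sub
      ((hasDerivWithinAt_id x _).smul_const (u' t t))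
  have hbound : ∀ x ∈ uIcc t s, ‖u' x t - u' t t‖ ≤ ε := by
    intro x hx
    have hxt : dist (x, t) (t, t) < δ := by
      simpa [Prod.dist_eq, Real.dist_eq] using
        (abs_sub_left_of_mem_uIcc hx).trans_lt hst
    simpa [dist_eq_norm] using (hδu' (x, t) ⟨hsub hx, ht⟩ (t, t) ⟨ht, ht⟩ hxt).le
  have hmvt := (convex_uIcc t s).norm_image_sub_le_of_norm_hasDerivWithin_le hderiv hbound
    left_mem_uIcc right_mem_uIcc
  calc
    ‖u s t - u t t - (s - t) • u' t t‖ = ‖u s t - s • u' t t - (u t t - t • u' t t)‖ := by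
      rw [sub_smul]
      abel_nf
    _ ≤ ε * ‖s - t‖ := hmvt

lemma hasDerivWithinAt_integral_Icc [CompleteSpace E] {f : ℝ → E} (hf : ContinuousOn f (Icc a b))
    {s : ℝ} (hs : s ∈ Icc a b) :
    HasDerivWithinAt (fun x ↦ ∫ y in a..x, f y) (f s) (Icc a b) s := by
  -- the instance of `FTCFilter` for `Icc a b` takes its membership proof from a `Fact`
  have : Fact (s ∈ Icc a b) := ⟨hs⟩
  refine intervalIntegral.integral_hasDerivWithinAt_right ?_
    (hf.stronglyMeasurableAtFilter_nhdsWithin measurableSet_Icc s) (hf s hs)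
  exact (hf.mono (uIcc_subset_Icc (left_mem_Icc.2 (hs.1.trans hs.2)) hs)).intervalIntegrable

end MeanValue

section Exponential

variable {A : Type*} [NormedCommRing A] [NormedAlgebra ℝ A] [CompleteSpace A]

lemma isLittleO_sub_exp_sub {u u' : ℝ → ℝ → A} (hdiag : ∀ t ∈ Icc a b, u t t = 1)
    (hu : ∀ s ∈ Icc a b, ∀ t ∈ Icc a b, HasDerivWithinAt (u · t) (u' s t) (Icc a b) s)
    (hu' : ContinuousOn (Function.uncurry u') (Icc a b ×ˢ Icc a b)) {F : ℝ → A}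
    (hF : ∀ s ∈ Icc a b, HasDerivWithinAt F (u' s s) (Icc a b) s) :
    (fun p : ℝ × ℝ ↦ u p.1 p.2 - NormedSpace.exp (F p.1 - F p.2))
      =o[nearDiagonal a b] fun p ↦ p.1 - p.2 := by
  let +nondep : NormedAlgebra ℚ A := .restrictScalars ℚ ℝ A
  have hFcont : ContinuousOn F (Icc a b) := fun s hs ↦ (hF s hs).continuousWithinAt
  have hexp : ∀ s ∈ Icc a b, ∀ t ∈ Icc a b, HasDerivWithinAt
      (fun s ↦ NormedSpace.exp (F s - F t)) (NormedSpace.exp (F s - F t) * u' s s) (Icc a b) s := by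
    intro s hs t _
    simpa using! (hasFDerivAt_exp (𝕂 := ℝ)).comp_hasDerivWithinAt s ((hF s hs).sub_const (F t))
  have hexp' : ContinuousOn
      (Function.uncurry fun s t ↦ NormedSpace.exp (F s - F t) * u' s s) (Icc a b ×ˢ Icc a b) :=
    (NormedSpace.exp_continuous.comp_continuousOn
      ((hFcont.comp continuousOn_fst fun _ hp ↦ hp.1).sub
        (hFcont.comp continuousOn_snd fun _ hp ↦ hp.2))).mul
      (hu'.comp (continuousOn_fst.prodMk continuousOn_fst) fun _ hp ↦ ⟨hp.1, hp.1⟩)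
  refine ((isLittleO_nearDiagonal_of_hasDerivWithinAt hu hu').sub
    (isLittleO_nearDiagonal_of_hasDerivWithinAt hexp hexp')).congr' ?_ .rfl
  filter_upwards [mem_inf_of_right (mem_principal_self _)] with p hp
  simp only [hdiag p.2 hp.2, sub_self, NormedSpace.exp_zero, one_mul]
  abel

lemma isLittleO_mul_exp_sub_one {u u' : ℝ → ℝ → A} (hdiag : ∀ t ∈ Icc a b, u t t = 1)
    (hu : ∀ s ∈ Icc a b, ∀ t ∈ Icc a b, HasDerivWithinAt (u · t) (u' s t) (Icc a b) s)
    (hu' : ContinuousOn (Function.uncurry u') (Icc a b ×ˢ Icc a b)) {F : ℝ → A}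
    (hF : ∀ s ∈ Icc a b, HasDerivWithinAt F (u' s s) (Icc a b) s) :
    (fun p : ℝ × ℝ ↦ u p.1 p.2 * NormedSpace.exp (F p.2 - F p.1) - 1)
      =o[nearDiagonal a b] fun p ↦ p.1 - p.2 := by
  let +nondep : NormedAlgebra ℚ A := .restrictScalars ℚ ℝ A
  have hFcont : ContinuousOn F (Icc a b) := fun s hs ↦ (hF s hs).continuousWithinAt
  have hcont : ContinuousOn (fun p : ℝ × ℝ ↦ NormedSpace.exp (F p.2 - F p.1))
      (Icc a b ×ˢ Icc a b) :=
    NormedSpace.exp_continuous.comp_continuousOn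
      ((hFcont.comp continuousOn_snd fun _ hp ↦ hp.2).sub
        (hFcont.comp continuousOn_fst fun _ hp ↦ hp.1))
  have hbdd : (fun p : ℝ × ℝ ↦ NormedSpace.exp (F p.2 - F p.1))
      =O[nearDiagonal a b] fun _ ↦ (1 : ℝ) :=
    (hcont.isBigO_principal (isCompact_Icc.prod isCompact_Icc) (by simp)).mono inf_le_right
  refine ((isLittleO_sub_exp_sub hdiag hu hu' hF).mul_isBigO hbdd).congr (fun p ↦ ?_) fun p ↦
    mul_one _
  rw [sub_mul, ← NormedSpace.exp_add, sub_add_sub_cancel', sub_self, NormedSpace.exp_zero]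

lemma Subdivision.prod_mul_exp_sub_mul_exp (P : Subdivision a b) (u : ℝ → ℝ → A) (F : ℝ → A) :
    P.prod (fun s t ↦ u s t * NormedSpace.exp (F t - F s)) * NormedSpace.exp (F b - F a) =
      P.prod u := by
  let +nondep : NormedAlgebra ℚ A := .restrictScalars ℚ ℝ A
  rw [← P.sum_sub F, NormedSpace.exp_sum, prod, ← Finset.prod_mul_distrib]
  refine Finset.prod_congr rfl fun i _ ↦ ?_
  rw [mul_assoc, ← NormedSpace.exp_add, sub_add_sub_cancel', sub_self, NormedSpace.exp_zero,
    mul_one]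

end Exponential

section ProductIntegral

variable {A : Type*} [NormedCommRing A] [NormOneClass A]

lemma Subdivision.norm_prod_sub_one_le (P : Subdivision a b) {u : ℝ → ℝ → A} {ε : ℝ}
    (hu : ∀ i < P.size,
      ‖u (P.point (i + 1)) (P.point i) - 1‖ ≤ ε * ‖P.point (i + 1) - P.point i‖) :
    ‖P.prod u - 1‖ ≤ Real.exp (ε * (b - a)) - 1 := by
  have hsum : ∑ i ∈ Finset.range P.size, ‖u (P.point (i + 1)) (P.point i) - 1‖ ≤ ε * (b - a) :=
    calc
      _ ≤ ∑ i ∈ Finset.range P.size, ε * ‖P.point (i + 1) - P.point i‖ :=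
        Finset.sum_le_sum fun i hi ↦ hu i (Finset.mem_range.1 hi)
      _ = ∑ i ∈ Finset.range P.size, ε * (P.point (i + 1) - P.point i) :=
        Finset.sum_congr rfl fun i _ ↦ by
          rw [Real.norm_of_nonneg (sub_nonneg.2 (P.monotone_point i.le_succ))]
      _ = ε * (b - a) := by rw [← Finset.mul_sum, P.sum_sub fun x ↦ x]
  calc
    _ = ‖∏ i ∈ Finset.range P.size, (1 + (u (P.point (i + 1)) (P.point i) - 1)) - 1‖ := by
      simp only [prod, add_sub_cancel]
    _ ≤ _ := Finset.norm_prod_one_add_sub_one_le _ _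
    _ ≤ _ := by gcongr

lemma Subdivision.tendsto_prod_one {u : ℝ → ℝ → A}
    (hu : (fun p : ℝ × ℝ ↦ u p.1 p.2 - 1) =o[nearDiagonal a b] fun p ↦ p.1 - p.2) :
    Tendsto (fun P : Subdivision a b ↦ P.prod u) (fine a b) (𝓝 1) := by
  have hexp : Tendsto (fun ε : ℝ ↦ Real.exp (ε * (b - a)) - 1) (𝓝[>] 0) (𝓝 0) :=
    tendsto_nhdsWithin_of_tendsto_nhds <|
      (by fun_prop : Continuous fun ε : ℝ ↦ Real.exp (ε * (b - a)) - 1).tendsto' _ _ (by simp)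
  refine Metric.tendsto_nhds.2 fun η hη ↦ ?_
  obtain ⟨ε, hεη, hε⟩ := ((hexp.eventually (gt_mem_nhds hη)).and self_mem_nhdsWithin).exists
  filter_upwards [eventually_forall_step (hu.bound hε)] with P hP
  exact (dist_eq_norm _ _).trans_lt ((P.norm_prod_sub_one_le hP).trans_lt hεη)

theorem Subdivision.tendsto_prod_exp_integral [NormedAlgebra ℝ A] [CompleteSpace A]
    {u u' : ℝ → ℝ → A}
    (hdiag : ∀ t ∈ Icc a b, u t t = 1)
    (hu : ∀ s ∈ Icc a b, ∀ t ∈ Icc a b, HasDerivWithinAt (u · t) (u' s t) (Icc a b) s)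
    (hu' : ContinuousOn (Function.uncurry u') (Icc a b ×ˢ Icc a b)) :
    Tendsto (fun P : Subdivision a b ↦ P.prod u) (fine a b)
      (𝓝 (NormedSpace.exp (∫ t in a..b, u' t t))) := by
  set F : ℝ → A := fun s ↦ ∫ t in a..s, u' t t with hF
  have hdiag' : ContinuousOn (fun t ↦ u' t t) (Icc a b) :=
    hu'.comp (continuousOn_id.prodMk continuousOn_id) fun t ht ↦ ⟨ht, ht⟩
  have hratio := tendsto_prod_one
    (u := fun s t ↦ u s t * NormedSpace.exp (F t - F s)) <|
    isLittleO_mul_exp_sub_one hdiag hu hu' fun s hs ↦ hasDerivWithinAt_integral_Icc hdiag' hs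
  have hFab : F b - F a = ∫ t in a..b, u' t t := by simp [hF]
  rw [← hFab]
  simpa only [prod_mul_exp_sub_mul_exp, one_mul] using
    hratio.mul_const (NormedSpace.exp (F b - F a))

end ProductIntegral

section Overlap

variable {H : Type*} [NormedAddCommGroup H] [InnerProductSpace ℂ H]

/-- The transition amplitude `⟪v, w⟫ / (‖v‖ ‖w‖)` between the rays through `v` and `w`. -/
noncomputable def overlap (v w : H) : ℂ :=
  ⟪v, w⟫_ℂ / (‖v‖ * ‖w‖)

lemma overlap_self {v : H} (hv : v ≠ 0) : overlap v v = 1 := by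
  have : (‖v‖ : ℂ) ≠ 0 := by simpa
  rw [overlap, inner_self_eq_norm_sq_to_K]
  simp [pow_two, this]

/-- The derivative at `s` of `s ↦ overlap (ψ s) w` along a path with `ψ s = v` and `ψ' s = v'`. -/
noncomputable def overlapDeriv (v v' w : H) : ℂ :=
  (⟪v', w⟫_ℂ - ⟪v, w⟫_ℂ * ((⟪v', v⟫_ℂ).re / ‖v‖ ^ 2 : ℝ)) / (‖v‖ * ‖w‖)

lemma overlapDeriv_self {v : H} (hv : v ≠ 0) (v' : H) :
    overlapDeriv v v' v = Complex.I * ((⟪v', v⟫_ℂ).im / ‖v‖ ^ 2 : ℝ) := by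
  have hv' : (‖v‖ : ℂ) ≠ 0 := by simpa
  have hself : ⟪v, v⟫_ℂ = (‖v‖ : ℂ) ^ 2 := inner_self_eq_norm_sq_to_K v
  rw [overlapDeriv, hself]
  push_cast
  field_simp
  linear_combination -Complex.re_add_im ⟪v', v⟫_ℂ

lemma hasDerivWithinAt_norm {ψ : ℝ → H} {ψ' : H} {S : Set ℝ} {s : ℝ}
    (hψ : HasDerivWithinAt ψ ψ' S s) (hs : ψ s ≠ 0) :
    HasDerivWithinAt (fun x ↦ ‖ψ x‖) ((⟪ψ', ψ s⟫_ℂ).re / ‖ψ s‖) S s := by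
  have hinner : HasDerivWithinAt (fun x ↦ (⟪ψ x, ψ x⟫_ℂ).re)
      ((⟪ψ s, ψ'⟫_ℂ + ⟪ψ', ψ s⟫_ℂ).re) S s :=
    Complex.reCLM.hasFDerivAt.comp_hasDerivWithinAt s (hψ.inner ℂ hψ)
  have hsymm : (⟪ψ s, ψ'⟫_ℂ).re = (⟪ψ', ψ s⟫_ℂ).re := inner_re_symm (𝕜 := ℂ) _ _
  have hpos : (⟪ψ s, ψ s⟫_ℂ).re ≠ 0 := fun h ↦
    hs ((re_inner_self_nonpos (𝕜 := ℂ)).1 h.le)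
  simp only [@norm_eq_sqrt_re_inner ℂ H]
  refine (hinner.sqrt hpos).congr_deriv ?_
  rw [Complex.add_re, hsymm, ← two_mul]
  exact mul_div_mul_left _ _ two_ne_zero

lemma hasDerivWithinAt_overlap {ψ : ℝ → H} {ψ' w : H} {S : Set ℝ} {s : ℝ}
    (hψ : HasDerivWithinAt ψ ψ' S s) (hs : ψ s ≠ 0) :
    HasDerivWithinAt (fun x ↦ overlap (ψ x) w) (overlapDeriv (ψ s) ψ' w) S s := by
  have hnorm : (‖ψ s‖ : ℂ) ≠ 0 := by simpa
  have hinner := hψ.inner ℂ (hasDerivWithinAt_const s S w)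
  have hquot := (hinner.div (hasDerivWithinAt_norm hψ hs).ofReal_comp hnorm).div_const (‖w‖ : ℂ)
  simp only [overlap, ← div_div]
  refine hquot.congr_deriv ?_
  simp only [overlapDeriv, inner_zero_right, zero_add]
  push_cast
  field_simp

lemma continuousOn_overlapDeriv {ψ ψ' : ℝ → H} (hψ : ContinuousOn ψ (Icc a b))
    (hψ' : ContinuousOn ψ' (Icc a b)) (h0 : ∀ t ∈ Icc a b, ψ t ≠ 0) :
    ContinuousOn (Function.uncurry fun s t ↦ overlapDeriv (ψ s) (ψ' s) (ψ t))
      (Icc a b ×ˢ Icc a b) := by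
  have hfst : ContinuousOn (fun p : ℝ × ℝ ↦ ψ p.1) (Icc a b ×ˢ Icc a b) :=
    hψ.comp continuousOn_fst fun _ hp ↦ hp.1
  have hsnd : ContinuousOn (fun p : ℝ × ℝ ↦ ψ p.2) (Icc a b ×ˢ Icc a b) :=
    hψ.comp continuousOn_snd fun _ hp ↦ hp.2
  have hfst' : ContinuousOn (fun p : ℝ × ℝ ↦ ψ' p.1) (Icc a b ×ˢ Icc a b) :=
    hψ'.comp continuousOn_fst fun _ hp ↦ hp.1
  have hnorm : ∀ p ∈ Icc a b ×ˢ Icc a b, ‖ψ p.1‖ ≠ 0 ∧ ‖ψ p.2‖ ≠ 0 := fun p hp ↦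
    ⟨norm_ne_zero_iff.2 (h0 _ hp.1), norm_ne_zero_iff.2 (h0 _ hp.2)⟩
  have hratio : ContinuousOn (fun p : ℝ × ℝ ↦ (⟪ψ' p.1, ψ p.1⟫_ℂ).re / ‖ψ p.1‖ ^ 2)
      (Icc a b ×ˢ Icc a b) :=
    (Complex.continuous_re.comp_continuousOn (hfst'.inner hfst)).div (hfst.norm.pow 2)
      fun p hp ↦ pow_ne_zero 2 (hnorm p hp).1
  refine ((hfst'.inner hsnd).sub ((hfst.inner hsnd).mul
    (Complex.continuous_ofReal.comp_continuousOn hratio))).div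
    ((Complex.continuous_ofReal.comp_continuousOn hfst.norm).mul
      (Complex.continuous_ofReal.comp_continuousOn hsnd.norm)) fun p hp ↦ ?_
  simpa using hnorm p hp

theorem Subdivision.tendsto_prod_overlap (hab : a ≤ b) {ψ ψ' : ℝ → H}
    (hψ : ∀ t ∈ Icc a b, HasDerivWithinAt ψ (ψ' t) (Icc a b) t) (hψ' : ContinuousOn ψ' (Icc a b))
    (h0 : ∀ t ∈ Icc a b, ψ t ≠ 0) :
    Tendsto (fun P : Subdivision a b ↦ P.prod fun s t ↦ overlap (ψ s) (ψ t)) (fine a b)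
      (𝓝 (Complex.exp (Complex.I * (∫ t in a..b, (⟪ψ' t, ψ t⟫_ℂ).im / ‖ψ t‖ ^ 2 : ℝ)))) := by
  have hcont : ContinuousOn ψ (Icc a b) := fun t ht ↦ (hψ t ht).continuousWithinAt
  have hlim := tendsto_prod_exp_integral
    (u := fun s t ↦ overlap (ψ s) (ψ t)) (u' := fun s t ↦ overlapDeriv (ψ s) (ψ' s) (ψ t))
    (fun t ht ↦ overlap_self (h0 t ht))
    (fun s hs t _ ↦ hasDerivWithinAt_overlap (hψ s hs) (h0 s hs))
    (continuousOn_overlapDeriv hcont hψ' h0)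
  have hint : ∫ t in a..b, overlapDeriv (ψ t) (ψ' t) (ψ t) =
      Complex.I * (∫ t in a..b, (⟪ψ' t, ψ t⟫_ℂ).im / ‖ψ t‖ ^ 2 : ℝ) := by
    rw [← intervalIntegral.integral_ofReal, ← intervalIntegral.integral_const_mul]
    exact intervalIntegral.integral_congr fun t ht ↦
      overlapDeriv_self (h0 t (uIcc_of_le hab ▸ ht)) (ψ' t)
  rwa [hint, ← Complex.exp_eq_exp_ℂ] at hlim

end Overlap

section Projective

variable {n : ℕ}

/-- The homogeneous coordinates `(1, z)` of the point `z` of the affine chart of `ℂPⁿ`. -/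
noncomputable def affineLift (z : Fin n → ℂ) : EuclideanSpace ℂ (Fin (n + 1)) :=
  WithLp.toLp 2 (Fin.cons 1 z)

/-- The tangent vector `(0, z')` to `affineLift`. -/
noncomputable def affineLiftDeriv (z' : Fin n → ℂ) : EuclideanSpace ℂ (Fin (n + 1)) :=
  WithLp.toLp 2 (Fin.cons 0 z')

lemma inner_affineLift (v z : Fin n → ℂ) :
    ⟪affineLift v, affineLift z⟫_ℂ = 1 + ∑ j, (starRingEnd ℂ) (v j) * z j := by
  simp [affineLift, PiLp.inner_apply, Fin.sum_univ_succ, mul_comm]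

lemma inner_affineLiftDeriv (v' z : Fin n → ℂ) :
    ⟪affineLiftDeriv v', affineLift z⟫_ℂ = ∑ j, (starRingEnd ℂ) (v' j) * z j := by
  simp [affineLift, affineLiftDeriv, PiLp.inner_apply, Fin.sum_univ_succ, mul_comm]

lemma norm_affineLift_sq (z : Fin n → ℂ) :
    ‖affineLift z‖ ^ 2 = 1 + ∑ j, Complex.normSq (z j) := by
  simp [affineLift, EuclideanSpace.norm_sq_eq, Fin.sum_univ_succ, Complex.normSq_eq_norm_sq]

lemma affineLift_ne_zero (z : Fin n → ℂ) : affineLift z ≠ 0 := fun h ↦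
  one_ne_zero (congrArg (fun x : EuclideanSpace ℂ (Fin (n + 1)) ↦ x 0) h)

lemma transAmp_eq_overlap_pow (N : ℕ) (v z : Fin n → ℂ) :
    transAmp n N v z = overlap (affineLift v) (affineLift z) ^ N := by
  have hsqrt : ∀ w : Fin n → ℂ,
      Real.sqrt ((1 + ∑ j, Complex.normSq (w j)) ^ N) = ‖affineLift w‖ ^ N := fun w ↦ by
    rw [← norm_affineLift_sq, ← pow_mul, mul_comm, pow_mul, Real.sqrt_sq (by positivity)]
  rw [transAmp, overlap, inner_affineLift, hsqrt, hsqrt, div_pow, mul_pow]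
  push_cast
  rfl

lemma hasDerivWithinAt_affineLift {γ : ℝ → Fin n → ℂ} {γ' : Fin n → ℂ} {S : Set ℝ} {s : ℝ}
    (hγ : HasDerivWithinAt γ γ' S s) :
    HasDerivWithinAt (fun t ↦ affineLift (γ t)) (affineLiftDeriv γ') S s := by
  have hcons : HasDerivWithinAt (fun t ↦ (Fin.cons 1 (γ t) : Fin (n + 1) → ℂ))
      (Fin.cons 0 γ') S s :=
    hasDerivWithinAt_pi.2 <| Fin.cases (hasDerivWithinAt_const s S 1) (hasDerivWithinAt_pi.1 hγ)
  exact (PiLp.hasFDerivAt_toLp (𝕜 := ℝ) 2 _).comp_hasDerivWithinAt s hcons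

lemma continuous_affineLiftDeriv :
    Continuous (affineLiftDeriv : (Fin n → ℂ) → EuclideanSpace ℂ (Fin (n + 1))) := by
  unfold affineLiftDeriv
  fun_prop

end Projective

theorem stmt_9_general (n N : ℕ) (hab : a ≤ b) (γ γ' : ℝ → Fin n → ℂ)
    (hderiv : ∀ t ∈ Icc a b, HasDerivWithinAt γ (γ' t) (Icc a b) t)
    (hcont : ContinuousOn γ' (Icc a b)) :
    Tendsto (fun P : Subdivision a b ↦ P.prod fun s t ↦ transAmp n N (γ s) (γ t))
      (Subdivision.fine a b)
      (𝓝 (Complex.exp (Complex.I * (N : ℂ) *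
        ((∫ t in a..b,
            (∑ j, (starRingEnd ℂ) (γ' t j) * γ t j).im /
              (1 + ∑ j, Complex.normSq (γ t j)) : ℝ) : ℂ)))) := by
  have hlift := (Subdivision.tendsto_prod_overlap hab
    (fun t ht ↦ hasDerivWithinAt_affineLift (hderiv t ht))
    (continuous_affineLiftDeriv.comp_continuousOn hcont)
    fun t _ ↦ affineLift_ne_zero (γ t)).pow N
  simp only [← Complex.exp_nat_mul, inner_affineLiftDeriv, norm_affineLift_sq] at hlift
  simpa only [Subdivision.prod, ← Finset.prod_pow, ← transAmp_eq_overlap_pow, mul_assoc,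
    mul_left_comm (N : ℂ)] using hlift

/-- transition amplitude along a path as holonomy.  For every
continuously differentiable path `γ : [0,1] → ℂⁿ`, the products of transition
amplitudes over uniform partitions converge:
`lim_{k→∞} Π_{i=0}^{k−1} a_N(γ((i+1)/k), γ(i/k))
  = exp(iN ∫₀¹ Im(Σⱼ conj(γⱼ′(t)) γⱼ(t))/(1+‖γ(t)‖²) dt)`,
i.e. the limit equals `exp(i ∫_γ Im(∂̄ log K))` for `K(z̄,z) = (1+‖z‖²)^N`. -/
theorem stmt_9 (n N : ℕ) (hn : 1 ≤ n) (hN : 1 ≤ N)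
    (γ γ' : ℝ → Fin n → ℂ)
    (hderiv : ∀ t ∈ Set.Icc (0 : ℝ) 1, HasDerivAt γ (γ' t) t)
    (hcont : ContinuousOn γ' (Set.Icc (0 : ℝ) 1)) :
    Filter.Tendsto
      (fun k : ℕ => ∏ i ∈ Finset.range k,
        transAmp n N (γ (((i : ℝ) + 1) / (k : ℝ))) (γ ((i : ℝ) / (k : ℝ))))
      Filter.atTop
      (nhds (Complex.exp (Complex.I * (N : ℂ) *
        ((∫ t in (0 : ℝ)..1,
            (∑ j, (starRingEnd ℂ) (γ' t j) * γ t j).im /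
              (1 + ∑ j, Complex.normSq (γ t j)) : ℝ) : ℂ)))) := by
  refine (tendsto_add_atTop_iff_nat 1).1 ?_
  simpa [Function.comp_def, Subdivision.prod, Subdivision.uniform] using!
    (stmt_9_general n N zero_le_one γ γ' (fun t ht ↦ (hderiv t ht).hasDerivWithinAt) hcont).comp
      (Subdivision.tendsto_uniform zero_le_one)
end
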